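/- Let n be odd, q = (n−1)/2, and let S_1,...,S_q ⊆ M define binary additive valuations v^{S_i}(X) = |X ∩ S_i|. If the associated asymmetric envy instance (as constructed in the lower bound: agent 1 counts all items toward everyone; agents 2i, 2i+1 use S_i and its complement as described) admits an EF_a-c allocation, then the 1/n-weighted discrepancy of {v^{S_1},...,v^{S_q}} is at most 6c, i.e., there exists A ⊆ M with max_{i∈[q]} |(1/n)|S_i| − |S_i ∩ A|| ≤ 6c. -/

import Mathlib

open Finset

/-! The bundle `A o` of the first agent is itself the required set. Write `x` and `y` for the two
agents attached to `S`. Since `o` counts all items, `#(A x) ≤ #(A o) + c`; since `x` compares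
itself with `o` on `S`, its deficit on `S` is at most `c`, so its surplus over `A o` on `M \ S` is
at most `2c`. As `x` compares itself with everybody else on `M \ S`, no bundle exceeds `A o` by
more than `3c` there, and exchanging the roles of `x` and `y` gives the same bound on `S`.

The bundle of `x` is also not much smaller than `A o`: it loses at most `c` on `S`, and at most `2c`
on `M \ S`, by comparison first with `y` and then of `y` with `o`. Every agent other than `o`
belongs to such a pair, so no bundle is smaller than `A o` by more than `3c`, and the upper bound on
`M \ S` turns into a lower bound on `S` with error `6c`. Averaging over all bundles bounds the
distance of `#(A o ∩ S)` from its proportional share. -/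

theorem abs_expect_sub_le {ι R : Type*} [Field R] [LinearOrder R] [IsStrictOrderedRing R]
    {s : Finset ι} (hs : s.Nonempty) {f : ι → R} {a r : R}
    (hf : ∀ i ∈ s, |f i - a| ≤ r) : |s.expect f - a| ≤ r :=
  calc |s.expect f - a| = |s.expect fun i ↦ f i - a| := by
        rw [expect_sub_distrib, expect_const hs]
    _ ≤ s.expect fun i ↦ |f i - a| := abs_expect_le _ _
    _ ≤ r := expect_le hs hf

theorem card_inter_add_card_inter_sdiff {α : Type*} [DecidableEq α] {M X : Finset α} (hX : X ⊆ M)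
    (S : Finset α) : #(X ∩ S) + #(X ∩ (M \ S)) = #X := by
  rw [← inter_sdiff_assoc, inter_eq_left.2 hX, card_inter_add_card_sdiff]

theorem card_eq_sum_card_inter {ι α : Type*} [Fintype ι] [DecidableEq α] {A : ι → Finset α}
    {S : Finset α} (hA : Pairwise fun i j ↦ Disjoint (A i) (A j)) (hS : S ⊆ univ.biUnion A) :
    #S = ∑ i, #(A i ∩ S) := by
  rw [← card_biUnion fun i _ j _ hij ↦ (hA hij).mono inter_subset_left inter_subset_left,
    ← biUnion_inter, inter_eq_right.2 hS]

theorem exists_eq_two_mul_add_one_or_two {q j : ℕ} (hj : j ≠ 0) (hjq : j < 2 * q + 1) :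
    ∃ i : Fin q, j = 2 * i + 1 ∨ j = 2 * i + 2 :=
  ⟨⟨(j - 1) / 2, by lia⟩, by dsimp only; lia⟩

section EnvyFree

variable {ι α : Type*} [DecidableEq α] {v : ι → ι → Finset α → ℕ} {A : ι → Finset α} {c : ℕ}

/-- `EF_a-c`: for the asymmetric valuations `v i j`, by which agent `i` compares itself with agent
`j`, the allocation `A` is envy-free up to the removal of `c` items from each pair of bundles. -/
def IsEnvyFreeUpTo (v : ι → ι → Finset α → ℕ) (c : ℕ) (A : ι → Finset α) : Prop :=
  ∀ i j, i ≠ j → ∃ P ⊆ A i ∪ A j, #P ≤ c ∧ v i j (A j \ P) ≤ v i j (A i \ P)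

namespace IsEnvyFreeUpTo

variable {i j : ι}

theorem apply_le_apply_add (hA : IsEnvyFreeUpTo v c A) (hij : i ≠ j) (hmono : Monotone (v i j))
    (hdrop : ∀ X P, v i j X ≤ v i j (X \ P) + #P) : v i j (A j) ≤ v i j (A i) + c := by
  obtain ⟨P, -, hPc, hP⟩ := hA i j hij
  calc v i j (A j) ≤ v i j (A j \ P) + #P := hdrop _ _
    _ ≤ v i j (A i) + c := add_le_add (hP.trans (hmono sdiff_subset)) hPc

theorem card_le_card_add (hA : IsEnvyFreeUpTo v c A) (hv : i ≠ j → ∀ X, v i j X = #X) :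
    #(A j) ≤ #(A i) + c := by
  obtain rfl | hij := eq_or_ne i j
  · exact Nat.le_add_right _ _
  have hv : v i j = card := funext (hv hij)
  simpa only [hv] using hA.apply_le_apply_add hij (hv ▸ card_mono)
    fun _ _ ↦ hv ▸ card_le_card_sdiff_add_card

theorem card_inter_le_card_inter_add {T : Finset α} (hA : IsEnvyFreeUpTo v c A)
    (hv : i ≠ j → ∀ X, v i j X = #(X ∩ T)) : #(A j ∩ T) ≤ #(A i ∩ T) + c := by
  obtain rfl | hij := eq_or_ne i j
  · exact Nat.le_add_right _ _
  have hv := hv hij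
  have hmono : Monotone (v i j) := fun X Y hXY ↦ by
    simpa only [hv] using card_le_card (inter_subset_inter_right hXY)
  have hdrop (X P : Finset α) : v i j X ≤ v i j (X \ P) + #P := by
    simpa only [hv, sdiff_inter_right_comm] using card_le_card_sdiff_add_card
  simpa only [hv] using hA.apply_le_apply_add hij hmono hdrop

end IsEnvyFreeUpTo

/-- The pair of agents attached to `S ⊆ M` in the lower-bound instance (`2i` and `2i + 1` in the
paper, for `S = S_i`): `x` compares itself with the distinguished agent `o` by counting items of `S`
and with everybody else by counting items of `M \ S`, while `y` does the opposite. -/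
structure IsOpposedPair (v : ι → ι → Finset α → ℕ) (o : ι) (M S : Finset α) (x y : ι) : Prop where
  subset : S ⊆ M
  left_ne : x ≠ o
  right_ne : y ≠ o
  left_apply_base : ∀ X, v x o X = #(X ∩ S)
  left_apply : ∀ j, j ≠ o → j ≠ x → ∀ X, v x j X = #(X ∩ (M \ S))
  right_apply_base : ∀ X, v y o X = #(X ∩ (M \ S))
  right_apply : ∀ j, j ≠ o → j ≠ y → ∀ X, v y j X = #(X ∩ S)

namespace IsOpposedPair

variable {o x y j : ι} {M S : Finset α}

theorem symm (h : IsOpposedPair v o M S x y) : IsOpposedPair v o M (M \ S) y x where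
  subset := sdiff_subset
  left_ne := h.right_ne
  right_ne := h.left_ne
  left_apply_base := h.right_apply_base
  left_apply := by simpa only [Finset.sdiff_sdiff_eq_self h.subset] using h.right_apply
  right_apply_base := by simpa only [Finset.sdiff_sdiff_eq_self h.subset] using h.left_apply_base
  right_apply := h.left_apply

theorem card_base_inter_le_left (h : IsOpposedPair v o M S x y) (hA : IsEnvyFreeUpTo v c A) :
    #(A o ∩ S) ≤ #(A x ∩ S) + c :=
  hA.card_inter_le_card_inter_add fun _ ↦ h.left_apply_base

theorem card_inter_sdiff_le_left (h : IsOpposedPair v o M S x y) (hA : IsEnvyFreeUpTo v c A)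
    (hj : j ≠ o) : #(A j ∩ (M \ S)) ≤ #(A x ∩ (M \ S)) + c :=
  hA.card_inter_le_card_inter_add fun hxj ↦ h.left_apply j hj hxj.symm

theorem card_base_le_left (h : IsOpposedPair v o M S x y) (hA : IsEnvyFreeUpTo v c A)
    (hAM : ∀ j, A j ⊆ M) : #(A o) ≤ #(A x) + 3 * c := by
  have ho := card_inter_add_card_inter_sdiff (hAM o) S
  have hx := card_inter_add_card_inter_sdiff (hAM x) S
  have hox : #(A o ∩ S) ≤ #(A x ∩ S) + c := h.card_base_inter_le_left hA
  have hoy : #(A o ∩ (M \ S)) ≤ #(A y ∩ (M \ S)) + c := h.symm.card_base_inter_le_left hA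
  have hyx : #(A y ∩ (M \ S)) ≤ #(A x ∩ (M \ S)) + c := h.card_inter_sdiff_le_left hA h.right_ne
  lia

theorem card_inter_sdiff_le_base (h : IsOpposedPair v o M S x y) (hA : IsEnvyFreeUpTo v c A)
    (hAM : ∀ j, A j ⊆ M) (hv : ∀ j, j ≠ o → ∀ X, v o j X = #X) (j : ι) :
    #(A j ∩ (M \ S)) ≤ #(A o ∩ (M \ S)) + 3 * c := by
  obtain rfl | hj := eq_or_ne j o
  · exact Nat.le_add_right _ _
  have ho := card_inter_add_card_inter_sdiff (hAM o) S
  have hx := card_inter_add_card_inter_sdiff (hAM x) S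
  have hcard : #(A x) ≤ #(A o) + c := hA.card_le_card_add fun _ ↦ hv x h.left_ne
  have hox : #(A o ∩ S) ≤ #(A x ∩ S) + c := h.card_base_inter_le_left hA
  have hjx : #(A j ∩ (M \ S)) ≤ #(A x ∩ (M \ S)) + c := h.card_inter_sdiff_le_left hA hj
  lia

theorem card_inter_le_base (h : IsOpposedPair v o M S x y) (hA : IsEnvyFreeUpTo v c A)
    (hAM : ∀ j, A j ⊆ M) (hv : ∀ j, j ≠ o → ∀ X, v o j X = #X) (j : ι) :
    #(A j ∩ S) ≤ #(A o ∩ S) + 3 * c := by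
  simpa only [Finset.sdiff_sdiff_eq_self h.subset] using h.symm.card_inter_sdiff_le_base hA hAM hv j

theorem card_base_inter_le (h : IsOpposedPair v o M S x y) (hA : IsEnvyFreeUpTo v c A)
    (hAM : ∀ j, A j ⊆ M) (hv : ∀ j, j ≠ o → ∀ X, v o j X = #X) (hj : #(A o) ≤ #(A j) + 3 * c) :
    #(A o ∩ S) ≤ #(A j ∩ S) + 6 * c := by
  have ho := card_inter_add_card_inter_sdiff (hAM o) S
  have hj' := card_inter_add_card_inter_sdiff (hAM j) S
  have hjo := h.card_inter_sdiff_le_base hA hAM hv j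
  lia

theorem abs_card_inter_sub_card_base_inter_le (h : IsOpposedPair v o M S x y)
    (hA : IsEnvyFreeUpTo v c A) (hAM : ∀ j, A j ⊆ M) (hv : ∀ j, j ≠ o → ∀ X, v o j X = #X)
    (hj : #(A o) ≤ #(A j) + 3 * c) : |(#(A j ∩ S) : ℝ) - #(A o ∩ S)| ≤ 6 * c := by
  have hupper : (#(A j ∩ S) : ℝ) ≤ #(A o ∩ S) + 3 * c :=
    mod_cast h.card_inter_le_base hA hAM hv j
  have hlower : (#(A o ∩ S) : ℝ) ≤ #(A j ∩ S) + 6 * c :=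
    mod_cast h.card_base_inter_le hA hAM hv hj
  rw [abs_le]
  constructor <;> linarith [c.cast_nonneg (α := ℝ)]

end IsOpposedPair

end EnvyFree

/-- If the lower-bound asymmetric envy instance built from `S_1, …, S_q`
admits an EF_a-c allocation, then the `1/n`-weighted discrepancy of the
collection `{v^{S_i}}` is at most `6c`: some set `B ⊆ M` is within `6c` of
the proportional share of each `S_i`. -/
theorem wdisc_from_efac {α : Type*} [DecidableEq α] {n q : ℕ}
    (hodd : Odd n) (hn : n = 2 * q + 1)
    (M : Finset α) (S : Fin q → Finset α) (hSM : ∀ i, S i ⊆ M)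
    (vv : Fin n → Fin n → Finset α → ℕ)
    (h1 : ∀ j : Fin n, j ≠ ⟨0, by omega⟩ → ∀ X : Finset α, vv ⟨0, by omega⟩ j X = X.card)
    (h2a : ∀ i : Fin q, ∀ X : Finset α,
      vv ⟨2 * (i : ℕ) + 1, by have := i.isLt; omega⟩ ⟨0, by omega⟩ X = (X ∩ S i).card)
    (h2b : ∀ i : Fin q, ∀ j : Fin n, j ≠ ⟨0, by omega⟩ →
      j ≠ ⟨2 * (i : ℕ) + 1, by have := i.isLt; omega⟩ → ∀ X : Finset α,
      vv ⟨2 * (i : ℕ) + 1, by have := i.isLt; omega⟩ j X = (X ∩ (M \ S i)).card)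
    (h3a : ∀ i : Fin q, ∀ X : Finset α,
      vv ⟨2 * (i : ℕ) + 2, by have := i.isLt; omega⟩ ⟨0, by omega⟩ X = (X ∩ (M \ S i)).card)
    (h3b : ∀ i : Fin q, ∀ j : Fin n, j ≠ ⟨0, by omega⟩ →
      j ≠ ⟨2 * (i : ℕ) + 2, by have := i.isLt; omega⟩ → ∀ X : Finset α,
      vv ⟨2 * (i : ℕ) + 2, by have := i.isLt; omega⟩ j X = (X ∩ S i).card)
    (c : ℕ) (hc : 1 ≤ c)
    (hEF : ∃ A : Fin n → Finset α,
      (∀ i j : Fin n, i ≠ j → Disjoint (A i) (A j)) ∧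
      Finset.univ.biUnion A = M ∧
      ∀ i j : Fin n, i ≠ j → ∃ P : Finset α, P ⊆ A i ∪ A j ∧ P.card ≤ c ∧
        vv i j (A i \ P) ≥ vv i j (A j \ P)) :
    ∃ B : Finset α, B ⊆ M ∧ ∀ i : Fin q,
      |(1 / (n : ℝ)) * ((S i).card : ℝ) - ((S i ∩ B).card : ℝ)| ≤ 6 * c := by
  obtain ⟨A, hdisj, hcover, hA⟩ := hEF
  have hAM (j : Fin n) : A j ⊆ M := hcover ▸ subset_biUnion_of_mem A (mem_univ j)
  have hpair (i : Fin q) : IsOpposedPair vv ⟨0, by lia⟩ M (S i) ⟨2 * i + 1, by lia⟩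
      ⟨2 * i + 2, by lia⟩ :=
    ⟨hSM i, by simp, by simp, h2a i, h2b i, h3a i, h3b i⟩
  have hsize (j : Fin n) : #(A ⟨0, by lia⟩) ≤ #(A j) + 3 * c := by
    obtain rfl | hj := eq_or_ne j ⟨0, by lia⟩
    · exact Nat.le_add_right _ _
    obtain ⟨i, hi | hi⟩ :=
      exists_eq_two_mul_add_one_or_two (Fin.val_ne_of_ne hj) (j.isLt.trans_eq hn)
    · simpa only [← hi] using (hpair i).card_base_le_left hA hAM
    · simpa only [← hi] using (hpair i).symm.card_base_le_left hA hAM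
  refine ⟨A ⟨0, by lia⟩, hAM _, fun i ↦ ?_⟩
  have hcard : (1 / n : ℝ) * #(S i) = univ.expect fun j ↦ (#(A j ∩ S i) : ℝ) := by
    rw [card_eq_sum_card_inter hdisj (hcover ▸ hSM i), Fintype.expect_eq_sum_div_card,
      Fintype.card_fin, Nat.cast_sum, one_div_mul_eq_div]
  rw [hcard, inter_comm]
  exact abs_expect_sub_le ⟨⟨0, by lia⟩, mem_univ _⟩ fun j _ ↦
    (hpair i).abs_card_inter_sub_card_base_inter_le hA hAM h1 (hsize j)
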